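/- arXiv:1811.04843 — 6 statements merged into one kernel-verified Lean document; each statement's English description precedes it below -/
import Mathlib

section
/- Let p be a prime number, V a finite-dimensional vector space over ℚ, S = Sym(V) the symmetric algebra with its standard grading, W a finite subgroup of GL(V) acting on S by graded algebra automorphisms, and σ ∈ GL(V) an element of finite order s ≥ 1 normalizing W (σWσ⁻¹ = W). Let φ : S → S be the graded ℚ-algebra endomorphism determined by φ(v) = p·σ⁻¹(v) for v ∈ V, so that φ(f) = p^d·σ⁻¹(f) for every homogeneous f of degree d; then φ preserves the invariant ring S^W. Let 𝓘 be the ideal of S^W generated by the elements f − φ(f) for f in the augmentation ideal S^W₊ (the invariants with vanishing constant term). Then 𝓘 = S^W₊. -/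
open MvPolynomial

lemma homComp_comm (n : ℕ)
    (w : MvPolynomial (Fin n) ℚ ≃ₐ[ℚ] MvPolynomial (Fin n) ℚ)
    (hw : ∀ d : ℕ, ∀ f ∈ homogeneousSubmodule (Fin n) ℚ d,
      w f ∈ homogeneousSubmodule (Fin n) ℚ d) (d : ℕ) (f : MvPolynomial (Fin n) ℚ) :
    homogeneousComponent d (w f) = w (homogeneousComponent d f) := by
  conv_lhs => rw [← sum_homogeneousComponent f, map_sum, map_sum]
  have h : ∀ i, homogeneousComponent d (w (homogeneousComponent i f)) =
      if i = d then w (homogeneousComponent d f) else 0 := by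
    intro i
    rw [homogeneousComponent_of_mem (hw i _ (homogeneousComponent_mem i f))]
    by_cases h : i = d
    · subst h; simp
    · simp [h, Ne.symm h]
  simp only [h, Finset.sum_ite_eq', Finset.mem_range]
  split_ifs with h1
  · rfl
  · rw [homogeneousComponent_eq_zero d f (by omega), map_zero]

lemma cc_zero (n d : ℕ) (hd : d ≠ 0) (f : MvPolynomial (Fin n) ℚ)
    (hf : f ∈ homogeneousSubmodule (Fin n) ℚ d) : constantCoeff f = 0 := by
  rw [mem_homogeneousSubmodule] at hf
  rw [constantCoeff_eq]
  exact hf.coeff_eq_zero (by simpa using hd.symm)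

/-- Let `p` be a prime, `V` a finite-dimensional `ℚ`-vector space
(modelled as `V = ℚⁿ`), and `S = Sym(V) = ℚ[X_0,…,X_{n−1}]` with its standard grading.
Let `W` be a finite group of graded algebra automorphisms of `S` (equivalently, a finite
subgroup of `GL(V)` acting functorially), and `σ` a graded algebra automorphism of finite
order `s ≥ 1` normalizing `W`.  Let `φ` be the graded algebra endomorphism with
`φ(f) = p^d · σ⁻¹(f)` for `f` homogeneous of degree `d`; it preserves the invariant ring
`S^W`.  Then the ideal `𝓘` of `S^W` generated by the elements `f − φ(f)`, for `f` in the
augmentation ideal `S^W₊`, is equal to `S^W₊` (the kernel of the constant-coefficient map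
on `S^W`). -/
theorem stmt_0 (p : ℕ) (hp : p.Prime) (n : ℕ)
    (W : Subgroup (MvPolynomial (Fin n) ℚ ≃ₐ[ℚ] MvPolynomial (Fin n) ℚ))
    (hWfin : (W : Set (MvPolynomial (Fin n) ℚ ≃ₐ[ℚ] MvPolynomial (Fin n) ℚ)).Finite)
    (hWgraded : ∀ w ∈ W, ∀ d : ℕ, ∀ f ∈ homogeneousSubmodule (Fin n) ℚ d,
      w f ∈ homogeneousSubmodule (Fin n) ℚ d)
    (σ : MvPolynomial (Fin n) ℚ ≃ₐ[ℚ] MvPolynomial (Fin n) ℚ)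
    (hσgraded : ∀ d : ℕ, ∀ f ∈ homogeneousSubmodule (Fin n) ℚ d,
      σ f ∈ homogeneousSubmodule (Fin n) ℚ d)
    (s : ℕ) (hs : 1 ≤ s) (hσord : σ ^ s = 1)
    (hnorm : ∀ w ∈ W, σ * w * σ⁻¹ ∈ W)
    (φ : MvPolynomial (Fin n) ℚ →ₐ[ℚ] MvPolynomial (Fin n) ℚ)
    (hφ : ∀ d : ℕ, ∀ f ∈ homogeneousSubmodule (Fin n) ℚ d,
      φ f = (p : ℚ) ^ d • σ⁻¹ f)
    (SW : Subalgebra ℚ (MvPolynomial (Fin n) ℚ))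
    (hSW : ∀ f, f ∈ SW ↔ ∀ w ∈ W, w f = f) :
    Ideal.span {x : SW | ∃ f : MvPolynomial (Fin n) ℚ,
        f ∈ SW ∧ constantCoeff f = 0 ∧ (x : MvPolynomial (Fin n) ℚ) = f - φ f}
      = RingHom.ker ((constantCoeff : MvPolynomial (Fin n) ℚ →+* ℚ).comp
          SW.val.toRingHom) := by
  have hinv : ∀ d : ℕ, ∀ f ∈ homogeneousSubmodule (Fin n) ℚ d,
      σ⁻¹ f ∈ homogeneousSubmodule (Fin n) ℚ d := by
    have hpow : ∀ k : ℕ, ∀ d : ℕ, ∀ f ∈ homogeneousSubmodule (Fin n) ℚ d,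
        (σ ^ k) f ∈ homogeneousSubmodule (Fin n) ℚ d := by
      intro k
      induction k with
      | zero => intro d f hf; simpa using hf
      | succ k ih =>
        intro d f hf
        rw [pow_succ, AlgEquiv.mul_apply]
        exact ih d _ (hσgraded d f hf)
    have e : σ⁻¹ = σ ^ (s - 1) := by
      rw [inv_eq_iff_mul_eq_one, ← pow_succ', Nat.sub_add_cancel hs, hσord]
    rw [e]
    exact hpow _
  have hSWinv : ∀ f ∈ SW, σ⁻¹ f ∈ SW := by
    intro f hf
    rw [hSW] at hf ⊢
    intro w hw
    have h1 := congrArg (fun x => σ⁻¹ x) (hf _ (hnorm w hw))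
    simp only [← AlgEquiv.mul_apply] at h1 ⊢
    rw [← h1]
    congr 1
    group
  have hcomp : ∀ f ∈ SW, ∀ d, homogeneousComponent d f ∈ SW := by
    intro f hf d
    rw [hSW] at hf ⊢
    intro w hw
    rw [← homComp_comm n w (hWgraded w hw), hf w hw]
  have hzero : ∀ f : MvPolynomial (Fin n) ℚ, constantCoeff f = 0 →
      homogeneousComponent 0 f = 0 := by
    intro f hf
    rw [homogeneousComponent_zero, ← constantCoeff_eq, hf, map_zero]
  have hcc : ∀ f : MvPolynomial (Fin n) ℚ, constantCoeff f = 0 → constantCoeff (φ f) = 0 := by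
    intro f hf
    rw [← sum_homogeneousComponent f, map_sum, map_sum]
    refine Finset.sum_eq_zero fun d _ => ?_
    by_cases hd : d = 0
    · subst hd; rw [hzero f hf]; simp
    · rw [hφ d _ (homogeneousComponent_mem d f)]
      exact cc_zero n d hd _ (Submodule.smul_mem _ _ (hinv d _ (homogeneousComponent_mem d f)))
  have hkey : ∀ d : ℕ, d ≠ 0 → ∀ f ∈ SW, f ∈ homogeneousSubmodule (Fin n) ℚ d →
      ∃ g ∈ SW, constantCoeff g = 0 ∧ f = g - φ g := by
    intro d hd f hfS hfd
    let u : ℕ → MvPolynomial (Fin n) ℚ := fun i => ((p : ℚ) ^ d) ^ i • (σ⁻¹ ^ i) f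
    have hu : ∀ i, (σ⁻¹ ^ i) f ∈ SW ∧ (σ⁻¹ ^ i) f ∈ homogeneousSubmodule (Fin n) ℚ d := by
      intro i
      induction i with
      | zero => simpa using ⟨hfS, hfd⟩
      | succ i ih =>
        rw [pow_succ', AlgEquiv.mul_apply]
        exact ⟨hSWinv _ ih.1, hinv _ _ ih.2⟩
    have hφu : ∀ i, φ (u i) = u (i + 1) := by
      intro i
      simp only [u]
      rw [map_smul, hφ d _ (hu i).2, smul_smul, ← pow_succ, pow_succ' σ⁻¹, AlgEquiv.mul_apply]
    have hne : (1 : ℚ) - ((p : ℚ) ^ d) ^ s ≠ 0 := by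
      have h1 : (1 : ℚ) < p := by exact_mod_cast hp.one_lt
      have h2 := one_lt_pow₀ (one_lt_pow₀ h1 hd) (by omega : s ≠ 0)
      linarith
    refine ⟨(1 - ((p : ℚ) ^ d) ^ s)⁻¹ • ∑ i ∈ Finset.range s, u i, ?_, ?_, ?_⟩
    · exact SW.smul_mem (SW.sum_mem fun i _ => SW.smul_mem (hu i).1 _) _
    · exact cc_zero n d hd _ (Submodule.smul_mem _ _
        (Submodule.sum_mem _ fun i _ => Submodule.smul_mem _ _ (hu i).2))
    · rw [map_smul, map_sum, ← smul_sub, ← Finset.sum_sub_distrib]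
      simp only [hφu]
      rw [Finset.sum_range_sub' u s]
      have hs' : u s = ((p : ℚ) ^ d) ^ s • f := by
        simp only [u]
        rw [inv_pow, hσord, inv_one, AlgEquiv.one_apply]
      have h0 : u 0 = f := by
        simp only [u]
        rw [pow_zero, pow_zero, one_smul, AlgEquiv.one_apply]
      rw [hs', h0]
      nth_rewrite 2 [← one_smul ℚ f]
      rw [← sub_smul, smul_smul, inv_mul_cancel₀ hne, one_smul]
  apply le_antisymm
  · rw [Ideal.span_le]
    rintro x ⟨f, hf, hf0, hx⟩
    change constantCoeff (x : MvPolynomial (Fin n) ℚ) = 0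
    rw [hx, map_sub, hcc f hf0, hf0, sub_zero]
  · intro x hx
    have hx0 : constantCoeff (x : MvPolynomial (Fin n) ℚ) = 0 := hx
    have hall : ∀ d, ∃ g ∈ SW, constantCoeff g = 0 ∧
        homogeneousComponent d (x : MvPolynomial (Fin n) ℚ) = g - φ g := by
      intro d
      by_cases hd : d = 0
      · subst hd
        exact ⟨0, SW.zero_mem, map_zero _, by rw [hzero _ hx0]; simp⟩
      · exact hkey d hd _ (hcomp _ x.2 d) (homogeneousComponent_mem d _)
    choose g hgS hg0 hg using hall
    refine Ideal.subset_span ⟨∑ d ∈ Finset.range ((x : MvPolynomial (Fin n) ℚ).totalDegree + 1), g d,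
      SW.sum_mem fun d _ => hgS d, ?_, ?_⟩
    · rw [map_sum]
      exact Finset.sum_eq_zero fun d _ => hg0 d
    · rw [map_sum, ← Finset.sum_sub_distrib]
      simp only [← hg]
      exact (sum_homogeneousComponent _).symm
end

section
/- Let V be a finite-dimensional ℚ-vector space and W ⊆ GL(V) a finite subgroup generated by reflections, acting faithfully on V; let S = Sym(V) and S^W the ring of W-invariants. For each w ∈ W let i_w : S ⊗_{S^W} S → S be the ℚ-algebra homomorphism determined by f ⊗ g ↦ f·w(g). Then the combined map ∏_{w∈W} i_w : S ⊗_{S^W} S → ∏_{w∈W} S is injective. -/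
open MvPolynomial TensorProduct

/-- The graded algebra automorphism of `Sym(V) = ℚ[X_0,…,X_{n−1}]` (for `V = ℚⁿ`) induced
functorially by a linear automorphism `g` of `V`: it sends `X i ↦ Σ_j (g e_i)_j · X j`. -/
noncomputable def polyActE {n : ℕ} (g : (Fin n → ℚ) ≃ₗ[ℚ] (Fin n → ℚ)) :
    MvPolynomial (Fin n) ℚ →ₐ[ℚ] MvPolynomial (Fin n) ℚ :=
  aeval fun i => ∑ j, C (g (Pi.single i 1) j) * X j

/-- A reflection of `V = ℚⁿ`: an element of finite order fixing a hyperplane pointwise. -/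
def IsReflection {n : ℕ} (g : (Fin n → ℚ) ≃ₗ[ℚ] (Fin n → ℚ)) : Prop :=
  IsOfFinOrder g ∧ ∃ H : Submodule ℚ (Fin n → ℚ), IsCoatom H ∧ ∀ x ∈ H, g x = x


namespace Stmt4

abbrev P (n : ℕ) := MvPolynomial (Fin n) ℚ
abbrev GLn (n : ℕ) := (Fin n → ℚ) ≃ₗ[ℚ] (Fin n → ℚ)

lemma nsmul_zero_rat {M : Type*} [AddCommGroup M] [Module ℚ M] (k : ℕ) (hk : k ≠ 0) (x : M)
    (h : k • x = 0) : x = 0 := by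
  rw [← Nat.cast_smul_eq_nsmul ℚ] at h
  have hk' : (k : ℚ) ≠ 0 := by exact_mod_cast hk
  rw [← one_smul ℚ x, ← inv_mul_cancel₀ hk', mul_smul, h, smul_zero]

/-- The linear form attached to a vector. -/
noncomputable def lin {n : ℕ} (v : Fin n → ℚ) : P n := ∑ j, C (v j) * X j

lemma lin_add {n : ℕ} (v w : Fin n → ℚ) : lin (v + w) = lin v + lin w := by
  simp [lin, add_mul, Finset.sum_add_distrib]

lemma lin_smul {n : ℕ} (c : ℚ) (v : Fin n → ℚ) : lin (c • v) = C c * lin v := by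
  simp [lin, Finset.mul_sum, mul_assoc]

lemma lin_single {n : ℕ} (i : Fin n) : lin (Pi.single i 1) = (X i : P n) := by
  rw [lin, Finset.sum_eq_single i]
  · simp
  · intro b _ hb
    simp [hb]
  · simp

lemma lin_eq_zero {n : ℕ} (v : Fin n → ℚ) (h : lin v = 0) : v = 0 := by
  funext j
  have := congrArg (aeval (Pi.single j (1 : ℚ))) h
  simpa [lin, Pi.single_apply] using this

lemma lin_hom {n : ℕ} (v : Fin n → ℚ) : (lin v).IsHomogeneous 1 := by
  apply IsHomogeneous.sum
  intro j _
  simpa using (isHomogeneous_C (Fin n) (v j)).mul (isHomogeneous_X ℚ j)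

lemma act_X {n : ℕ} (g : GLn n) (i : Fin n) :
    polyActE g (X i) = lin (g (Pi.single i 1)) := by
  simp [polyActE, lin]

lemma vec_eq {n : ℕ} (v : Fin n → ℚ) : v = ∑ j, v j • (Pi.single j 1 : Fin n → ℚ) := by
  funext k
  simp [Finset.sum_apply, Pi.single_apply]

noncomputable def linL {n : ℕ} : (Fin n → ℚ) →ₗ[ℚ] P n where
  toFun := lin
  map_add' := lin_add
  map_smul' c v := by simp [lin_smul, MvPolynomial.smul_eq_C_mul]

lemma act_lin {n : ℕ} (g : GLn n) (v : Fin n → ℚ) : polyActE g (lin v) = lin (g v) := by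
  have : (polyActE g).toLinearMap ∘ₗ linL = linL ∘ₗ g.toLinearMap := by
    apply LinearMap.pi_ext'
    intro i
    ext1
    change polyActE g (lin (Pi.single i 1)) = lin (g (Pi.single i 1))
    rw [lin_single, act_X]
  exact LinearMap.congr_fun this v

lemma act_mul {n : ℕ} (g h : GLn n) (f : P n) :
    polyActE (g * h) f = polyActE g (polyActE h f) := by
  have : polyActE (g * h) = (polyActE g).comp (polyActE h) := by
    apply MvPolynomial.algHom_ext
    intro i
    rw [AlgHom.comp_apply, act_X, act_X, act_lin]
    rfl
  rw [this]; rfl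

lemma act_one {n : ℕ} (f : P n) : polyActE (1 : GLn n) f = f := by
  have : polyActE (1 : GLn n) = AlgHom.id ℚ (P n) := by
    apply MvPolynomial.algHom_ext
    intro i
    rw [act_X]
    exact lin_single i
  rw [this]; rfl

lemma act_inj {n : ℕ} (g : GLn n) (f : P n) (h : polyActE g f = 0) : f = 0 := by
  have := act_mul g⁻¹ g f
  rw [h, map_zero, inv_mul_cancel, act_one] at this
  exact this

lemma act_deg {n : ℕ} (g : GLn n) (f : P n) :
    (polyActE g f).totalDegree ≤ f.totalDegree := by
  conv_lhs => rw [MvPolynomial.as_sum f, map_sum]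
  refine (totalDegree_finsetSum _ _).trans (Finset.sup_le ?_)
  intro d hd
  refine le_trans ?_ (le_totalDegree hd)
  rw [polyActE, aeval_monomial]
  refine (totalDegree_mul _ _).trans ?_
  have h1 : (algebraMap ℚ (P n) (f.coeff d)).totalDegree = 0 := totalDegree_C _
  rw [h1, zero_add]
  refine (totalDegree_finsetProd _ _).trans ?_
  apply Finset.sum_le_sum
  intro j _
  refine (totalDegree_pow _ _).trans ?_
  have := (lin_hom (g (Pi.single j 1))).totalDegree_le
  calc _ ≤ d j * 1 := Nat.mul_le_mul_left _ this
    _ = d j := mul_one _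

/-- The root of a reflection. -/
lemma exists_root {n : ℕ} (s : GLn n) (hs : IsReflection s) :
    ∃ v : Fin n → ℚ, v ≠ 0 ∧ ∀ x, ∃ c : ℚ, s x = x + c • v := by
  obtain ⟨_, H, hH, hfix⟩ := hs
  obtain ⟨u, hu⟩ : ∃ u, u ∉ H := by
    by_contra! h
    exact hH.1 (eq_top_iff.2 fun x _ => h x)
  have hu0 : u ≠ 0 := fun h => hu (h ▸ H.zero_mem)
  have hsup : H ⊔ Submodule.span ℚ {u} = ⊤ := by
    apply hH.2
    refine lt_of_le_of_ne le_sup_left ?_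
    intro h
    apply hu
    rw [h]
    exact Submodule.mem_sup_right (Submodule.mem_span_singleton_self u)
  have key : ∀ x, ∃ c : ℚ, s x = x + c • (s u - u) := by
    intro x
    have hx : x ∈ H ⊔ Submodule.span ℚ {u} := hsup ▸ Submodule.mem_top
    obtain ⟨y, hy, z, hz, rfl⟩ := Submodule.mem_sup.1 hx
    obtain ⟨c, rfl⟩ := Submodule.mem_span_singleton.1 hz
    refine ⟨c, ?_⟩
    rw [map_add, hfix y hy, map_smul, smul_sub]
    abel
  by_cases h : s u - u = 0
  · refine ⟨u, hu0, fun x => ⟨0, ?_⟩⟩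
    obtain ⟨c, hc⟩ := key x
    rw [hc, h]; simp
  · exact ⟨_, h, key⟩

lemma exists_demazure {n : ℕ} (s : GLn n) (v : Fin n → ℚ)
    (hv : ∀ x, ∃ c : ℚ, s x = x + c • v) (f : P n) :
    ∃ d : P n, polyActE s f = f + lin v * d := by
  induction f using MvPolynomial.induction_on with
  | C a => exact ⟨0, by simp [polyActE]⟩
  | add p q hp hq =>
    obtain ⟨a, ha⟩ := hp
    obtain ⟨b, hb⟩ := hq
    exact ⟨a + b, by rw [map_add, ha, hb]; ring⟩
  | mul_X p i hp =>
    obtain ⟨a, ha⟩ := hp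
    obtain ⟨c, hc⟩ := hv (Pi.single i 1)
    refine ⟨a * X i + p * C c + lin v * a * C c, ?_⟩
    rw [map_mul, ha, act_X, hc, lin_add, lin_smul, lin_single]; ring

section
variable {n : ℕ} {SW : Subalgebra ℚ (P n)}

/-- The action of an element fixing `SW`, as an `SW`-linear map. -/
noncomputable def actL (g : GLn n) (hg : ∀ r ∈ SW, polyActE g r = r) : P n →ₗ[SW] P n where
  toFun := polyActE g
  map_add' := map_add _
  map_smul' r f := by
    rw [Subalgebra.smul_def, Subalgebra.smul_def, smul_eq_mul, smul_eq_mul, map_mul, hg _ r.2]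
    rfl

lemma exists_demazureL (s : GLn n) (hs : IsReflection s) (hg : ∀ r ∈ SW, polyActE s r = r) :
    ∃ (a : P n) (D : P n →ₗ[SW] P n), a ≠ 0 ∧ (∀ f, polyActE s f = f + a * D f) ∧
      ∀ f k, f.totalDegree < k + 1 → D f = 0 ∨ (D f).totalDegree < k := by
  obtain ⟨v, hv0, hv⟩ := exists_root s hs
  choose d hd using exists_demazure s v hv
  have ha : lin v ≠ 0 := fun h => hv0 (lin_eq_zero v h)
  refine ⟨lin v, ⟨⟨d, ?_⟩, ?_⟩, ha, hd, ?_⟩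
  · intro f g
    apply mul_left_cancel₀ ha
    have h1 := hd (f + g)
    rw [map_add, hd f, hd g] at h1
    linear_combination -h1
  · intro r f
    apply mul_left_cancel₀ ha
    have h1 := hd (r • f)
    rw [Subalgebra.smul_def, smul_eq_mul, map_mul, hg _ r.2, hd f] at h1
    rw [RingHom.id_apply, Subalgebra.smul_def, Subalgebra.smul_def, smul_eq_mul, smul_eq_mul]
    linear_combination -h1
  · intro f k hf
    change d f = 0 ∨ (d f).totalDegree < k
    by_cases h0 : d f = 0
    · exact Or.inl h0
    right
    have h1 : lin v * d f = polyActE s f - f := by rw [hd f]; ring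
    have h2 : (lin v * d f).totalDegree = (lin v).totalDegree + (d f).totalDegree :=
      totalDegree_mul_of_isDomain ha h0
    have h3 : (lin v).totalDegree = 1 := (lin_hom v).totalDegree ha
    have h4 : (polyActE s f - f).totalDegree ≤ f.totalDegree :=
      (totalDegree_sub _ _).trans (max_le (act_deg s f) le_rfl)
    rw [← h1, h2, h3] at h4
    omega

/-- Tensors whose right factors have degree `< k`. -/
noncomputable def filt (SW : Subalgebra ℚ (P n)) (k : ℕ) : Submodule SW (P n ⊗[SW] P n) :=
  Submodule.span SW {x | ∃ f g : P n, g.totalDegree < k ∧ x = f ⊗ₜ[SW] g}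

lemma exists_filt (x : P n ⊗[SW] P n) : ∃ k, x ∈ filt SW k := by
  have mono : ∀ {a b}, a ≤ b → filt SW a ≤ filt (n := n) SW b := by
    intro a b hab
    apply Submodule.span_mono
    rintro _ ⟨f, g, hg, rfl⟩
    exact ⟨f, g, by omega, rfl⟩
  induction x using TensorProduct.induction_on with
  | zero => exact ⟨0, Submodule.zero_mem _⟩
  | tmul f g => exact ⟨g.totalDegree + 1, Submodule.subset_span ⟨f, g, by omega, rfl⟩⟩
  | add x y hx hy =>
    obtain ⟨a, ha⟩ := hx
    obtain ⟨b, hb⟩ := hy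
    exact ⟨max a b, Submodule.add_mem _ (mono (le_max_left _ _) ha) (mono (le_max_right _ _) hb)⟩

lemma filt_map (D : P n →ₗ[SW] P n)
    (hD : ∀ f k, f.totalDegree < k + 1 → D f = 0 ∨ (D f).totalDegree < k) (k : ℕ)
    (x : P n ⊗[SW] P n) (hx : x ∈ filt SW (k + 1)) : D.lTensor (P n) x ∈ filt SW k := by
  have : filt SW (k + 1) ≤ (filt SW k).comap (D.lTensor (P n)) := by
    apply Submodule.span_le.2
    rintro _ ⟨f, g, hg, rfl⟩
    change D.lTensor (P n) (f ⊗ₜ g) ∈ filt SW k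
    rw [LinearMap.lTensor_tmul]
    rcases hD g k hg with h | h
    · rw [h, TensorProduct.tmul_zero]; exact Submodule.zero_mem _
    · exact Submodule.subset_span ⟨f, _, h, rfl⟩
  exact this hx

end

end Stmt4

set_option maxHeartbeats 1000000 in
open Stmt4 in
/-- Let `V` be a finite-dimensional `ℚ`-vector space (modelled as
`V = ℚⁿ`), `W ⊆ GL(V)` a finite subgroup generated by reflections, `S = Sym(V)` and
`S^W` the invariant subring.  For `w ∈ W` let `i_w : S ⊗_{S^W} S → S` be the map
determined by `f ⊗ g ↦ f · w(g)`.  Then the combined map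
`∏_{w ∈ W} i_w : S ⊗_{S^W} S → ∏_{w ∈ W} S` is injective. -/
theorem stmt_4 (n : ℕ)
    (W : Subgroup ((Fin n → ℚ) ≃ₗ[ℚ] (Fin n → ℚ)))
    (hWfin : (W : Set ((Fin n → ℚ) ≃ₗ[ℚ] (Fin n → ℚ))).Finite)
    (hWrefl : ∃ G : Set ((Fin n → ℚ) ≃ₗ[ℚ] (Fin n → ℚ)),
        (∀ g ∈ G, IsReflection g) ∧ Subgroup.closure G = W)
    (SW : Subalgebra ℚ (MvPolynomial (Fin n) ℚ))
    (hSW : ∀ f, f ∈ SW ↔ ∀ g ∈ W, polyActE g f = f)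
    (i : ∀ _ : W, (MvPolynomial (Fin n) ℚ ⊗[↥SW] MvPolynomial (Fin n) ℚ) →ₗ[↥SW]
        MvPolynomial (Fin n) ℚ)
    (hi : ∀ (w : W) (f g : MvPolynomial (Fin n) ℚ),
        i w (f ⊗ₜ[↥SW] g) = f * polyActE (w : (Fin n → ℚ) ≃ₗ[ℚ] (Fin n → ℚ)) g) :
    Function.Injective fun (x : MvPolynomial (Fin n) ℚ ⊗[↥SW] MvPolynomial (Fin n) ℚ)
      (w : W) => i w x := by
  obtain ⟨G, hG, hGW⟩ := hWrefl
  have : Finite W := hWfin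
  have := Fintype.ofFinite W
  have hfix : ∀ w ∈ W, ∀ r ∈ SW, polyActE w r = r := fun w hw r hr => (hSW r).1 hr w hw
  let A : W → (MvPolynomial (Fin n) ℚ →ₗ[SW] MvPolynomial (Fin n) ℚ) :=
    fun w => actL w.1 (hfix w.1 w.2)
  have hA : ∀ w f, A w f = polyActE w.1 f := fun w f => rfl
  have main : ∀ k (x : MvPolynomial (Fin n) ℚ ⊗[↥SW] MvPolynomial (Fin n) ℚ),
      x ∈ filt SW k → (∀ w, i w x = 0) → x = 0 := by
    intro k
    induction k with
    | zero =>
      intro x hx _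
      simpa [filt] using hx
    | succ k ih =>
      intro x hx hix
      have hinv : ∀ w (hw : w ∈ W), (A ⟨w, hw⟩).lTensor (MvPolynomial (Fin n) ℚ) x = x := by
        have comp : ∀ (a b : W) y, (A (a * b)).lTensor (MvPolynomial (Fin n) ℚ) y =
            (A a).lTensor (MvPolynomial (Fin n) ℚ)
              ((A b).lTensor (MvPolynomial (Fin n) ℚ) y) := by
          intro a b y
          rw [← LinearMap.lTensor_comp_apply]
          congr 2
          ext1 f
          exact act_mul a.1 b.1 f
        have one : A 1 = LinearMap.id := by
          ext1 f
          exact act_one f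
        have hcl : ∀ w (hw : w ∈ Subgroup.closure G),
            (A ⟨w, hGW ▸ hw⟩).lTensor (MvPolynomial (Fin n) ℚ) x = x := by
          intro w hw
          induction hw using Subgroup.closure_induction with
          | mem s hs =>
            have hsW : s ∈ W := hGW ▸ Subgroup.subset_closure hs
            obtain ⟨a, D, ha, hD, hdeg⟩ := exists_demazureL s (hG s hs) (hfix s hsW)
            have hform : ∀ (w : W) y, i (w * ⟨s, hsW⟩) y =
                i w y + polyActE w.1 a * i w (D.lTensor (MvPolynomial (Fin n) ℚ) y) := by
              intro w y
              induction y using TensorProduct.induction_on with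
              | zero => simp
              | tmul f g =>
                rw [LinearMap.lTensor_tmul, hi, hi, hi, Subgroup.coe_mul, act_mul, hD g,
                  map_add, map_mul]
                ring
              | add y z hy hz =>
                simp only [map_add, hy, hz]; ring
            have hzero : D.lTensor (MvPolynomial (Fin n) ℚ) x = 0 := by
              apply ih _ (filt_map D hdeg k x hx)
              intro w
              have h := hform w x
              rw [hix, hix, zero_add] at h
              rcases mul_eq_zero.1 h.symm with h | h
              · exact absurd (act_inj _ _ h) ha
              · exact h
            have hs' : A ⟨s, hsW⟩ = LinearMap.id + (LinearMap.mulLeft SW a) ∘ₗ D := by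
              ext1 f
              exact hD f
            rw [hs', LinearMap.lTensor_add, LinearMap.add_apply, LinearMap.lTensor_id,
              LinearMap.lTensor_comp_apply, hzero, map_zero, add_zero]
            rfl
          | one =>
            have : A ⟨1, hGW ▸ Subgroup.one_mem _⟩ = LinearMap.id := one
            rw [this, LinearMap.lTensor_id]; rfl
          | mul a b ha hb iha ihb =>
            have := comp ⟨a, hGW ▸ ha⟩ ⟨b, hGW ▸ hb⟩ x
            rw [ihb, iha] at this
            exact this
          | inv a ha iha =>
            have := comp ⟨a, hGW ▸ ha⟩⁻¹ ⟨a, hGW ▸ ha⟩ x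
            rw [iha, inv_mul_cancel, one, LinearMap.lTensor_id] at this
            exact this.symm
        intro w hw
        exact hcl w (hGW.symm ▸ hw)
      have hN : ∀ g, (∑ w, A w) g ∈ SW := by
        intro g
        rw [hSW]
        intro u hu
        simp only [LinearMap.sum_apply, map_sum, hA]
        refine Fintype.sum_equiv (Equiv.mulLeft (⟨u, hu⟩ : W)) _ _ fun w => ?_
        rw [Equiv.coe_mulLeft, Subgroup.coe_mul, act_mul]
      have havg : ∀ y, ∃ f, (∑ w, A w).lTensor (MvPolynomial (Fin n) ℚ) y =
          f ⊗ₜ[SW] (1 : MvPolynomial (Fin n) ℚ) := by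
        intro y
        induction y using TensorProduct.induction_on with
        | zero => exact ⟨0, by simp⟩
        | tmul f g =>
          refine ⟨(⟨_, hN g⟩ : SW) • f, ?_⟩
          rw [LinearMap.lTensor_tmul, TensorProduct.smul_tmul, Subalgebra.smul_def,
            smul_eq_mul, mul_one]
        | add y z hy hz =>
          obtain ⟨a, ha⟩ := hy
          obtain ⟨b, hb⟩ := hz
          exact ⟨a + b, by rw [map_add, ha, hb, TensorProduct.add_tmul]⟩
      have hsum : (∑ w, A w).lTensor (MvPolynomial (Fin n) ℚ) x = Fintype.card W • x := by
        have : (∑ w, A w).lTensor (MvPolynomial (Fin n) ℚ) =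
            ∑ w, (A w).lTensor (MvPolynomial (Fin n) ℚ) :=
          map_sum (LinearMap.lTensorHom (MvPolynomial (Fin n) ℚ)) _ _
        rw [this, LinearMap.sum_apply, Finset.sum_congr rfl fun w _ => hinv w.1 w.2]
        simp
      obtain ⟨f, hf⟩ := havg x
      rw [hsum] at hf
      have hf0 : f = 0 := by
        have h := congrArg (i 1) hf
        rw [map_nsmul, hix, smul_zero, hi, map_one, mul_one] at h
        exact h.symm
      rw [hf0, TensorProduct.zero_tmul] at hf
      exact nsmul_zero_rat _ Fintype.card_ne_zero _ hf
  intro x y hxy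
  obtain ⟨k, hk⟩ := exists_filt (x - y)
  refine sub_eq_zero.1 (main k _ hk fun w => ?_)
  rw [map_sub, sub_eq_zero]
  exact congrFun hxy w
end

section
/- Let n ≥ 1. In ℚ[x_1,…,x_n,y_1,…,y_n] set Φ_n := ∏_{1≤i<j≤n}(x_i − y_j); set c_i := σ_i(x_1,…,x_n) + σ_i(y_1,…,y_n) for 0 ≤ i ≤ n (where σ_i is the i-th elementary symmetric polynomial, σ_0 = 1, so c_0 = 2) and c_i := 0 for i < 0 or i > n; and set Γ_n := det((c_{n+1+j−2i})_{1≤i,j≤n}). The hyperoctahedral group W_n of signed permutations of {1,…,n} acts on ℚ[x_1,…,x_n] by w(x_j) = ε_j x_{k_j} where w sends j to ±k_j; for w ∈ W_n let e_w be the substitution fixing each x_i and sending y_j to w(x_j). Then e_{id}(Φ_n·Γ_n) = ∏_{1≤i<j≤n}(x_i − x_j)(x_i + x_j) · ∏_{i=1}^n 2x_i, the product of the positive roots of Sp_{2n}, while e_w(Φ_n·Γ_n) = 0 for every w ≠ id. -/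
open MvPolynomial Finset

/-- `Φ_n := ∏_{1≤i<j≤n} (x_i − y_j)` in `ℚ[x_1,…,x_n,y_1,…,y_n]`, where the `x`-variables
are indexed by `Sum.inl` and the `y`-variables by `Sum.inr`. -/
noncomputable def PhiC (n : ℕ) : MvPolynomial (Fin n ⊕ Fin n) ℚ :=
  ∏ i : Fin n, ∏ j ∈ Finset.Ioi i, (X (Sum.inl i) - X (Sum.inr j))

/-- `c_k := σ_k(x_1,…,x_n) + σ_k(y_1,…,y_n)` for `0 ≤ k ≤ n` (so `c_0 = 2`), and `c_k := 0`
otherwise (type `Cₙ` normalization). -/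
noncomputable def cC (n : ℕ) (k : ℤ) : MvPolynomial (Fin n ⊕ Fin n) ℚ :=
  if 0 ≤ k ∧ k ≤ (n : ℤ) then
    rename Sum.inl (esymm (Fin n) ℚ k.toNat) + rename Sum.inr (esymm (Fin n) ℚ k.toNat)
  else 0

/-- `Γ_n := det((c_{n+1+j−2i})_{1≤i,j≤n})`; with `0`-indexed `i, j` the entry is
`c_{n+j−2i}`. -/
noncomputable def GammaC (n : ℕ) : MvPolynomial (Fin n ⊕ Fin n) ℚ :=
  (Matrix.of fun i j : Fin n => cC n ((n : ℤ) + (j : ℤ) - 2 * (i : ℤ))).det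

/-- `∏ (s + z_i)` as a polynomial in `s`. -/
noncomputable def FC {n : ℕ} {R : Type*} [CommRing R] (z : Fin n → R) : Polynomial R :=
  ∏ i, (Polynomial.X + Polynomial.C (z i))

lemma FC_natDegree {n : ℕ} {R : Type*} [CommRing R] [Nontrivial R] (z : Fin n → R) :
    (FC z).natDegree = n := by
  unfold FC
  rw [Polynomial.natDegree_prod_of_monic _ _ (fun i _ => Polynomial.monic_X_add_C _)]
  simp

lemma FC_coeff {n : ℕ} {R : Type*} [CommRing R] [Algebra ℚ R] (z : Fin n → R) (k : ℕ)
    (hk : k ≤ n) : (FC z).coeff k = aeval z (esymm (Fin n) ℚ (n - k)) := by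
  unfold FC
  rw [Finset.prod_X_add_C_coeff _ _ (by simpa using hk)]
  simp [esymm]

lemma cC_entry {n : ℕ} {R : Type*} [CommRing R] [Nontrivial R] [Algebra ℚ R]
    (x y : Fin n → R) (i j : Fin n) :
    aeval (Sum.elim x y) (cC n ((n : ℤ) + (j : ℤ) - 2 * (i : ℤ)))
      = (Polynomial.X ^ (j : ℕ) * (FC x + FC y)).coeff (2 * (i : ℕ)) := by
  rw [Polynomial.coeff_X_pow_mul']
  unfold cC
  by_cases h1 : (j : ℕ) ≤ 2 * (i : ℕ)
  · rw [if_pos h1]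
    by_cases h2 : 2 * (i : ℕ) - j ≤ n
    · rw [if_pos (by omega), Polynomial.coeff_add, FC_coeff _ _ h2, FC_coeff _ _ h2]
      have : ((n : ℤ) + (j : ℤ) - 2 * (i : ℤ)).toNat = n - (2 * (i : ℕ) - j) := by omega
      rw [this, map_add, aeval_rename, aeval_rename]
      rfl
    · rw [if_neg (by omega), map_zero, Polynomial.coeff_eq_zero_of_natDegree_lt]
      refine lt_of_le_of_lt (Polynomial.natDegree_add_le _ _) ?_
      rw [FC_natDegree, FC_natDegree]
      simp
      omega
  · rw [if_neg h1, if_neg (by omega), map_zero]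

lemma GammaC_eval {n : ℕ} {R : Type*} [CommRing R] [Nontrivial R] [Algebra ℚ R]
    (x y : Fin n → R) :
    aeval (Sum.elim x y) (GammaC n) = (Matrix.of fun i j : Fin n =>
      (Polynomial.X ^ (j : ℕ) * (FC x + FC y)).coeff (2 * (i : ℕ))).det := by
  unfold GammaC
  rw [AlgHom.map_det]
  congr 1
  ext i j
  simp only [AlgHom.mapMatrix_apply, Matrix.map_apply, Matrix.of_apply]
  rw [cC_entry]

lemma sum_range_two_mul {R : Type*} [CommRing R] (f : ℕ → R) (n : ℕ) :
    ∑ m ∈ range (2 * n), f m = ∑ i ∈ range n, (f (2 * i) + f (2 * i + 1)) := by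
  induction n with
  | zero => simp
  | succ k ih =>
    rw [show 2 * (k + 1) = 2 * k + 1 + 1 by ring, sum_range_succ, sum_range_succ, ih,
      sum_range_succ]
    ring

lemma even_part {n : ℕ} {R : Type*} [CommRing R] (p : Polynomial R) (hp : p.natDegree < 2 * n)
    (a : R) : p.eval a + p.eval (-a) = 2 * ∑ i : Fin n, (a ^ 2) ^ (i : ℕ) * p.coeff (2 * (i : ℕ)) := by
  rw [Polynomial.eval_eq_sum_range' hp, Polynomial.eval_eq_sum_range' hp, sum_range_two_mul,
    sum_range_two_mul, ← sum_add_distrib, mul_sum,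
    Fin.sum_univ_eq_sum_range (fun i => 2 * ((a ^ 2) ^ i * p.coeff (2 * i)))]
  refine sum_congr rfl fun i _ => ?_
  rw [pow_succ (-a), pow_mul (-a), pow_succ a, pow_mul a]
  ring

lemma prod_all {n : ℕ} {R : Type*} [CommRing R] (x : Fin n → R) :
    ∏ k, ∏ i, (x k + x i) = (∏ i, (2 * x i)) * (∏ i, ∏ j ∈ Ioi i, (x i + x j)) ^ 2 := by
  have h : ∀ k : Fin n, ∏ i, (x k + x i)
      = (2 * x k) * (∏ i ∈ Ioi k, (x k + x i)) * ∏ i ∈ Iio k, (x i + x k) := by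
    intro k
    have hu : (univ : Finset (Fin n)) = insert k (Ioi k ∪ Iio k) := by
      ext i
      simp only [mem_univ, mem_insert, mem_union, mem_Ioi, mem_Iio, true_iff]
      omega
    rw [hu, prod_insert (by simp), prod_union, two_mul, mul_assoc]
    · congr 2
      exact prod_congr rfl fun i _ => add_comm _ _
    · rw [Finset.disjoint_left]
      intro i
      simp only [mem_Ioi, mem_Iio]
      omega
  have hs : ∏ k, ∏ i ∈ Iio k, (x i + x k) = ∏ i, ∏ j ∈ Ioi i, (x i + x j) :=
    prod_comm' (by simp)
  rw [prod_congr rfl fun k _ => h k, prod_mul_distrib, prod_mul_distrib, hs]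
  ring

lemma Gamma_id (n : ℕ) :
    (aeval (Sum.elim (fun i => X i) fun j => (X j : MvPolynomial (Fin n) ℚ))) (GammaC n)
      = (∏ i : Fin n, (2 * X i)) * ∏ i : Fin n, ∏ j ∈ Finset.Ioi i, (X i + X j) := by
  rw [GammaC_eval]
  set x : Fin n → MvPolynomial (Fin n) ℚ := fun i => X i with hx
  set M := (Matrix.of fun i j : Fin n =>
      (Polynomial.X ^ (j : ℕ) * (FC x + FC x)).coeff (2 * (i : ℕ))) with hM
  have hmul : Matrix.vandermonde (fun k => x k ^ 2) * M
      = Matrix.diagonal (fun k => ∏ i, (x k + x i)) * Matrix.vandermonde x := by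
    ext1 k j
    rw [Matrix.diagonal_mul, Matrix.mul_apply]
    simp only [Matrix.vandermonde_apply, hM, Matrix.of_apply]
    have hd : (Polynomial.X ^ (j : ℕ) * (FC x + FC x)).natDegree < 2 * n := by
      have h1 := Polynomial.natDegree_mul_le (p := (Polynomial.X ^ (j : ℕ))) (q := (FC x + FC x))
      have h2 := Polynomial.natDegree_add_le (FC x) (FC x)
      rw [FC_natDegree, max_self] at h2
      rw [Polynomial.natDegree_X_pow] at h1
      omega
    have h := even_part _ hd (x k)
    have h0 : (FC x).eval (-x k) = 0 := by
      unfold FC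
      rw [Polynomial.eval_prod]
      exact prod_eq_zero (mem_univ k) (by simp)
    have h1 : (FC x).eval (x k) = ∏ i, (x k + x i) := by
      unfold FC
      rw [Polynomial.eval_prod]
      simp
    rw [Polynomial.eval_mul, Polynomial.eval_mul, Polynomial.eval_add, Polynomial.eval_add,
      h0, h1] at h
    simp only [Polynomial.eval_pow, Polynomial.eval_X] at h
    refine mul_left_cancel₀ (two_ne_zero) (h.symm.trans ?_)
    ring
  have hdet := congrArg Matrix.det hmul
  rw [Matrix.det_mul, Matrix.det_mul, Matrix.det_diagonal, Matrix.det_vandermonde,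
    Matrix.det_vandermonde, prod_all] at hdet
  have hsq : ∏ i, ∏ j ∈ Ioi i, (x j ^ 2 - x i ^ 2)
      = (∏ i, ∏ j ∈ Ioi i, (x j - x i)) * ∏ i, ∏ j ∈ Ioi i, (x i + x j) := by
    simp only [← prod_mul_distrib]
    exact prod_congr rfl fun i _ => prod_congr rfl fun j _ => by ring
  rw [hsq] at hdet
  have hA : ∏ i, ∏ j ∈ Ioi i, (x j - x i) ≠ 0 := by
    rw [prod_ne_zero_iff]
    intro i _
    rw [prod_ne_zero_iff]
    intro j hj h
    rw [mem_Ioi] at hj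
    exact hj.ne' (X_injective (sub_eq_zero.mp h))
  have hB : ∏ i, ∏ j ∈ Ioi i, (x i + x j) ≠ 0 := by
    rw [prod_ne_zero_iff]
    intro i _
    rw [prod_ne_zero_iff]
    intro j hj h
    have := congrArg (MvPolynomial.eval (fun _ => (1 : ℚ))) h
    simp [hx] at this
  refine mul_left_cancel₀ (mul_ne_zero hA hB) (hdet.trans ?_)
  ring

lemma neg_one_pow_mul_self' {R : Type*} [CommRing R] (m : ℕ) : (-1 : R) ^ m * (-1) ^ m = 1 := by
  rw [← mul_pow]
  simp

lemma Gamma_zero {n : ℕ} (x y : Fin n → MvPolynomial (Fin n) ℚ) (a : Fin n → MvPolynomial (Fin n) ℚ)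
    (A : Finset (Fin n)) (hA : A.Nonempty) (hx : FC x = FC a)
    (hy1 : ∀ j ∈ A, y j = - a j) (hy2 : ∀ j ∉ A, y j = a j) :
    aeval (Sum.elim x y) (GammaC n) = 0 := by
  rw [GammaC_eval, ← Matrix.exists_mulVec_eq_zero_iff]
  set S := ∏ j ∈ A, (Polynomial.X + Polynomial.C (a j)) with hS
  set T := ∏ j ∈ A, (Polynomial.X - Polynomial.C (a j)) with hT
  set P := ∏ j ∈ Aᶜ, (Polynomial.X + Polynomial.C (a j)) with hP
  set Q := ∏ j ∈ Aᶜ, (Polynomial.X - Polynomial.C (a j)) with hQ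
  have hF : FC x = S * P := by
    rw [hx]
    exact (prod_mul_prod_compl A _).symm
  have hG : FC y = T * P := by
    unfold FC
    rw [← prod_mul_prod_compl A]
    congr 1
    · exact prod_congr rfl fun j hj => by rw [hy1 j hj, Polynomial.C_neg, sub_eq_add_neg]
    · exact prod_congr rfl fun j hj => by rw [hy2 j (mem_compl.mp hj)]
  set U := Polynomial.X ^ (#A - 1) * Q with hU
  have hQm : Q.Monic := Polynomial.monic_prod_of_monic _ _ fun i _ => Polynomial.monic_X_sub_C _
  have hUm : U.Monic := (Polynomial.monic_X_pow _).mul hQm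
  have hApos : 0 < #A := hA.card_pos
  have hUd : U.natDegree < n := by
    have hQd : Q.natDegree = #(Aᶜ) := by
      rw [hQ, Polynomial.natDegree_prod_of_monic _ _ (fun i _ => Polynomial.monic_X_sub_C _)]
      simp
    rw [hU, (Polynomial.monic_X_pow _).natDegree_mul hQm, Polynomial.natDegree_X_pow, hQd]
    have := card_add_card_compl A
    rw [Fintype.card_fin] at this
    omega
  have c1 : ∀ B : Finset (Fin n), (∏ j ∈ B, (Polynomial.X + Polynomial.C (a j))).comp
      (Polynomial.C (-1) * Polynomial.X)
      = (-1) ^ #B * ∏ j ∈ B, (Polynomial.X - Polynomial.C (a j)) := by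
    intro B
    rw [Polynomial.prod_comp, ← prod_const, ← prod_mul_distrib]
    refine prod_congr rfl fun j _ => ?_
    simp
    ring
  have c2 : ∀ B : Finset (Fin n), (∏ j ∈ B, (Polynomial.X - Polynomial.C (a j))).comp
      (Polynomial.C (-1) * Polynomial.X)
      = (-1) ^ #B * ∏ j ∈ B, (Polynomial.X + Polynomial.C (a j)) := by
    intro B
    rw [Polynomial.prod_comp, ← prod_const, ← prod_mul_distrib]
    refine prod_congr rfl fun j _ => ?_
    simp
    ring
  have hodd : (U * (FC x + FC y)).comp (Polynomial.C (-1) * Polynomial.X)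
      = - (U * (FC x + FC y)) := by
    rw [hF, hG, hU]
    simp only [Polynomial.mul_comp, Polynomial.add_comp, Polynomial.pow_comp, Polynomial.X_comp]
    rw [hS, hT, hP, hQ, c1, c1, c2, c2, ← hS, ← hT, ← hP, ← hQ]
    obtain ⟨m, hm⟩ : ∃ m, #A = m + 1 := ⟨#A - 1, by omega⟩
    rw [hm, Nat.add_sub_cancel, mul_pow, ← Polynomial.C_pow]
    have e1 : ((-1 : Polynomial (MvPolynomial (Fin n) ℚ)) ^ m) * (-1) ^ m = 1 := neg_one_pow_mul_self' _
    have e2 : ((-1 : Polynomial (MvPolynomial (Fin n) ℚ)) ^ #(Aᶜ)) * (-1) ^ #(Aᶜ) = 1 := neg_one_pow_mul_self' _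
    have e3 : Polynomial.C ((-1 : MvPolynomial (Fin n) ℚ) ^ m) = (-1) ^ m := by simp
    rw [e3, pow_succ]
    linear_combination (-(Polynomial.X ^ m * Q * (S * P + T * P))) * e1
      - (Polynomial.X ^ m * Q * (S * P + T * P)) * ((-1) ^ m * (-1) ^ m) * e2
  refine ⟨fun j => U.coeff j, ?_, ?_⟩
  · intro h
    have h1 := congrFun h ⟨U.natDegree, hUd⟩
    simp only [Pi.zero_apply] at h1
    rw [Polynomial.coeff_natDegree, hUm.leadingCoeff] at h1
    exact one_ne_zero h1
  · funext i
    have hsum : (U * (FC x + FC y)).coeff (2 * (i : ℕ)) = ∑ j : Fin n,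
        (Polynomial.X ^ (j : ℕ) * (FC x + FC y)).coeff (2 * (i : ℕ)) * U.coeff j := by
      conv_lhs => rw [U.as_sum_range_C_mul_X_pow' hUd]
      rw [sum_mul, Polynomial.finsetSum_coeff]
      refine (Fin.sum_univ_eq_sum_range (fun j : ℕ =>
        (Polynomial.C (U.coeff j) * Polynomial.X ^ j * (FC x + FC y)).coeff
          (2 * (i : ℕ))) n).symm.trans ?_
      refine sum_congr rfl fun j _ => ?_
      rw [mul_assoc, Polynomial.coeff_C_mul, mul_comm]
    have hz := congrArg (fun p => Polynomial.coeff p (2 * (i : ℕ))) hodd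
    simp only [Polynomial.comp_C_mul_X_coeff, Polynomial.coeff_neg] at hz
    rw [pow_mul, neg_one_sq, one_pow, mul_one, self_eq_neg] at hz
    rw [hsum] at hz
    simpa [Matrix.mulVec, dotProduct] using hz

lemma exists_lt_of_ne_one {n : ℕ} (π : Equiv.Perm (Fin n)) (h : π ≠ 1) : ∃ j, π j < j := by
  by_contra! hc
  apply h
  have hs : ∑ j, ((π j : Fin n) : ℕ) = ∑ j : Fin n, (j : ℕ) :=
    Equiv.sum_comp π (fun j : Fin n => (j : ℕ))
  have := (sum_eq_sum_iff_of_le (s := univ) (f := fun j : Fin n => (j : ℕ))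
    (g := fun j => ((π j : Fin n) : ℕ)) (fun j _ => hc j)).mp hs.symm
  ext j
  simpa using (this j (mem_univ j)).symm

/-- type `Cₙ`.  For a signed permutation `w = (π, ε)` of `{1,…,n}`
(`ε j ∈ {1,−1}`) let `e_w` be the substitution fixing the `x_i` and sending
`y_j ↦ ε_j·x_{π(j)}`.  Then `e_id(Φ_n·Γ_n) = ∏_{i<j}(x_i−x_j)(x_i+x_j)·∏_i 2x_i`, the
product of the positive roots of `Sp_{2n}`, while `e_w(Φ_n·Γ_n) = 0` for every `w ≠ id`. -/
theorem stmt_6 (n : ℕ) (hn : 1 ≤ n) :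
    (aeval (Sum.elim (fun i => X i) fun j => (X j : MvPolynomial (Fin n) ℚ)))
        (PhiC n * GammaC n)
      = (∏ i : Fin n, ∏ j ∈ Finset.Ioi i, ((X i - X j) * (X i + X j))) *
          ∏ i : Fin n, (2 * X i)
    ∧ ∀ (π : Equiv.Perm (Fin n)) (ε : Fin n → ℚ), (∀ j, ε j = 1 ∨ ε j = -1) →
        ¬(π = 1 ∧ ε = fun _ => 1) →
        (aeval (Sum.elim (fun i => X i) fun j => C (ε j) * X (π j)))
            (PhiC n * GammaC n) = 0 := by
  constructor
  · rw [map_mul, Gamma_id]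
    have hP : (aeval (Sum.elim (fun i => X i) fun j => (X j : MvPolynomial (Fin n) ℚ))) (PhiC n)
        = ∏ i : Fin n, ∏ j ∈ Finset.Ioi i, (X i - X j) := by
      simp [PhiC, map_prod]
    rw [hP]
    simp only [prod_mul_distrib]
    ring
  · intro π ε hε hne
    rw [map_mul]
    by_cases hall : ∀ j, ε j = 1
    · have hπ : π ≠ 1 := fun h => hne ⟨h, funext hall⟩
      obtain ⟨j, hj⟩ := exists_lt_of_ne_one π hπ
      refine mul_eq_zero_of_left ?_ _
      unfold PhiC
      rw [map_prod]
      refine prod_eq_zero (mem_univ (π j)) ?_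
      rw [map_prod]
      refine prod_eq_zero (mem_Ioi.mpr hj) ?_
      simp [hall]
    · push Not at hall
      obtain ⟨j, hj⟩ := hall
      refine mul_eq_zero_of_right _ ?_
      refine Gamma_zero _ _ (fun j => X (π j)) (univ.filter fun j => ε j = -1)
        ⟨j, by simpa using (hε j).resolve_left hj⟩ ?_ ?_ ?_
      · unfold FC
        exact (Equiv.prod_comp π
          (fun i => Polynomial.X + Polynomial.C (X i : MvPolynomial (Fin n) ℚ))).symm
      · intro k hk
        simp only [mem_filter, mem_univ, true_and] at hk
        simp [hk]
      · intro k hk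
        simp only [mem_filter, mem_univ, true_and] at hk
        simp [(hε k).resolve_right hk]
end

section
/- Let g ≥ 1 and let W = {w ∈ S_{2g} : w(i) + w(2g+1−i) = 2g+1 for all i} with simple reflections s_i = τ_{i,i+1}·τ_{2g−i,2g+1−i} (1 ≤ i ≤ g−1), s_g = τ_{g,g+1}, and I = {s_1,…,s_{g−1}}. Let z ∈ W be the element [g+1, g+2, …, 2g, 1, 2, …, g] in one-line notation. For w ∈ W define σ_w : W → W by σ_w(x) = (wz)·x·(wz)⁻¹ and I_w := {s ∈ I : σ_w^k(s) ∈ I for all k ≥ 1}. For 0 ≤ f ≤ g let u_f ∈ W be the element with one-line notation [g+1, …, g+f, 1, g+f+1, …, 2g−1, 2, …, g−f, 2g, g−f+1, …, g]. Then I_{u_f} = I ∖ {s_1, s_2, …, s_{g−f}}; in particular I_{u_g} = I and I_{u_1} = I_{u_0} = ∅. -/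
/-- The simple reflections `s_i` (`1 ≤ i ≤ g`) of the Weyl group of `GSp_{2g}` (type
`C_g`), realized inside the symmetric group of `{0,…,2g−1}` (the `0`-indexed version of
`{1,…,2g}`): for `1 ≤ i ≤ g−1`, `s_i = τ_{i,i+1}·τ_{2g−i,2g+1−i}`, and
`s_g = τ_{g,g+1}` (`1`-indexed); `sgen g i = 1` for `i` outside `{1,…,g}`. -/
def sgen (g : ℕ) (i : ℕ) : Equiv.Perm (Fin (2 * g)) :=
  if h : 1 ≤ i ∧ i ≤ g - 1 then
    Equiv.swap ⟨i - 1, by omega⟩ ⟨i, by omega⟩ *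
      Equiv.swap ⟨2 * g - i - 1, by omega⟩ ⟨2 * g - i, by omega⟩
  else if h2 : i = g ∧ 1 ≤ g then
    Equiv.swap ⟨g - 1, by omega⟩ ⟨g, by omega⟩
  else 1

/-- The `0`-indexed one-line notation of the element
`u_f = [g+1, …, g+f, 1, g+f+1, …, 2g−1, 2, …, g−f, 2g, g−f+1, …, g]` of the Weyl group of
`GSp_{2g}` (for `0 ≤ f ≤ g` and `0 ≤ i ≤ 2g−1`). -/
def uLine (g f i : ℕ) : ℕ :=
  if i < f then g + i
  else if i = f then 0
  else if i ≤ g - 1 then g + i - 1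
  else if i ≤ 2 * g - f - 2 then i - g + 1
  else if i = 2 * g - f - 1 then 2 * g - 1
  else i - g

lemma sgen_val (g j : ℕ) (h1 : 1 ≤ j) (h2 : j ≤ g - 1) (x : Fin (2 * g)) :
    ((sgen g j x : Fin (2 * g)) : ℕ) = if (x : ℕ) = j - 1 then j else if (x : ℕ) = j then j - 1
      else if (x : ℕ) = 2 * g - j - 1 then 2 * g - j
      else if (x : ℕ) = 2 * g - j then 2 * g - j - 1 else x := by
  have hx := x.2
  unfold sgen
  rw [dif_pos ⟨h1, h2⟩]
  rw [Equiv.Perm.mul_apply, Equiv.swap_apply_def, Equiv.swap_apply_def]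
  simp only [Fin.ext_iff, apply_ite Fin.val]
  split_ifs <;> omega

/-- Values of `v = u_f z`. -/
def vVal (g f x : ℕ) : ℕ :=
  if x + f + 1 < g then x + 1 else if x + f + 1 = g then 2 * g - 1
    else if x < g + f then x else if x = g + f then 0 else x - 1

set_option maxHeartbeats 2000000 in
lemma conj_shift (g f : ℕ) (hf : f ≤ g) (v : Equiv.Perm (Fin (2 * g)))
    (hv : ∀ x : Fin (2 * g), (v x : ℕ) = vVal g f x) (i : ℕ) (h1 : 1 ≤ i)
    (h2 : i + 1 ≤ g - 1) (h3 : i + 1 ≤ g - f - 1) : v * sgen g i * v⁻¹ = sgen g (i + 1) := by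
  rw [mul_inv_eq_iff_eq_mul]
  ext x
  have hx := x.2
  have a := sgen_val g i h1 (by omega) x
  have b := hv (sgen g i x)
  have c := hv x
  have d := sgen_val g (i + 1) (by omega) h2 (v x)
  simp only [Equiv.Perm.mul_apply]
  generalize (v (sgen g i x) : ℕ) = B at *
  generalize (sgen g (i + 1) (v x) : ℕ) = D at *
  generalize (sgen g i x : ℕ) = A at *
  generalize (v x : ℕ) = C at *
  generalize (x : ℕ) = X at *
  unfold vVal at b c
  clear hv
  split_ifs at a <;> split_ifs at c <;> try omega
  all_goals (split_ifs at b <;> try omega)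
  all_goals (split_ifs at d <;> omega)

set_option maxHeartbeats 2000000 in
lemma conj_fix (g f : ℕ) (hf : f ≤ g) (v : Equiv.Perm (Fin (2 * g)))
    (hv : ∀ x : Fin (2 * g), (v x : ℕ) = vVal g f x) (i : ℕ) (h1 : 1 ≤ i)
    (h2 : i ≤ g - 1) (h3 : g - f < i) : v * sgen g i * v⁻¹ = sgen g i := by
  rw [mul_inv_eq_iff_eq_mul]
  ext x
  have hx := x.2
  have a := sgen_val g i h1 h2 x
  have b := hv (sgen g i x)
  have c := hv x
  have d := sgen_val g i h1 h2 (v x)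
  simp only [Equiv.Perm.mul_apply]
  generalize (v (sgen g i x) : ℕ) = B at *
  generalize (sgen g i (v x) : ℕ) = D at *
  generalize (sgen g i x : ℕ) = A at *
  generalize (v x : ℕ) = C at *
  generalize (x : ℕ) = X at *
  unfold vVal at b c
  clear hv
  split_ifs at a <;> split_ifs at c <;> try omega
  all_goals (split_ifs at b <;> try omega)
  all_goals (split_ifs at d <;> omega)

set_option maxHeartbeats 2000000 in
lemma conj_out (g f : ℕ) (hf : f ≤ g) (v : Equiv.Perm (Fin (2 * g)))
    (hv : ∀ x : Fin (2 * g), (v x : ℕ) = vVal g f x) (i : ℕ) (h1 : 1 ≤ i)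
    (h2 : i ≤ g - 1) (h3 : i ≤ g - f) (h4 : ¬ (i + 1 ≤ g - 1 ∧ i + 1 ≤ g - f - 1)) :
    v * sgen g i * v⁻¹ ∉ sgen g '' Set.Icc 1 (g - 1) := by
  rintro ⟨j, ⟨hj1, hj2⟩, hj⟩
  rw [eq_mul_inv_iff_mul_eq] at hj
  have hx : g - f - 1 < 2 * g := by omega
  have h := congrArg (fun p : Equiv.Perm (Fin (2 * g)) =>
    ((p ⟨g - f - 1, hx⟩ : Fin (2 * g)) : ℕ)) hj
  have a := sgen_val g i h1 h2 ⟨g - f - 1, hx⟩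
  have b := hv (sgen g i ⟨g - f - 1, hx⟩)
  have c := hv ⟨g - f - 1, hx⟩
  have d := sgen_val g j hj1 hj2 (v ⟨g - f - 1, hx⟩)
  simp only [Equiv.Perm.mul_apply] at h a b c d
  rw [h] at d
  clear h hj hv
  generalize (v (sgen g i ⟨g - f - 1, hx⟩) : ℕ) = B at *
  generalize (sgen g i ⟨g - f - 1, hx⟩ : ℕ) = A at *
  generalize (v ⟨g - f - 1, hx⟩ : ℕ) = C at *
  unfold vVal at b c
  split_ifs at a <;> split_ifs at c <;> try omega
  all_goals (split_ifs at b <;> try omega)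
  all_goals (split_ifs at d <;> omega)

set_option maxHeartbeats 2000000 in
lemma conj_pow_succ {G : Type*} [Group G] (v t : G) (k : ℕ) :
    v ^ (k + 1) * t * (v ^ (k + 1))⁻¹ = v ^ k * (v * t * v⁻¹) * (v ^ k)⁻¹ := by
  rw [pow_succ]; group

lemma not_all (g f : ℕ) (hf : f ≤ g) (v : Equiv.Perm (Fin (2 * g)))
    (hv : ∀ x : Fin (2 * g), (v x : ℕ) = vVal g f x) (n : ℕ) : ∀ i : ℕ, g - i ≤ n → 1 ≤ i →
    i ≤ g - 1 → i ≤ g - f → ¬ ∀ k : ℕ, 1 ≤ k →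
      v ^ k * sgen g i * (v ^ k)⁻¹ ∈ sgen g '' Set.Icc 1 (g - 1) := by
  induction n with
  | zero => intro i; omega
  | succ n ih =>
    intro i hn h1 h2 h3 H
    by_cases h4 : i + 1 ≤ g - 1 ∧ i + 1 ≤ g - f - 1
    · refine ih (i + 1) (by omega) (by omega) h4.1 (by omega) fun k hk => ?_
      rw [← conj_shift g f hf v hv i h1 h4.1 h4.2, ← conj_pow_succ]
      exact H _ (by omega)
    · have := H 1 le_rfl
      rw [pow_one] at this
      exact conj_out g f hf v hv i h1 h2 h3 h4 this

/-- Let `g ≥ 1`, `W` the Weyl group of `GSp_{2g}` in `S_{2g}` with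
simple reflections `s_1,…,s_g`, `I = {s_1,…,s_{g−1}}`, and `z = [g+1,…,2g,1,…,g]` in
one-line notation.  For `w ∈ W` let `σ_w(x) = (wz)·x·(wz)⁻¹` and
`I_w = {s ∈ I : σ_w^k(s) ∈ I for all k ≥ 1}`.  For `0 ≤ f ≤ g` let `u_f` be the element
with one-line notation `[g+1,…,g+f, 1, g+f+1,…,2g−1, 2,…,g−f, 2g, g−f+1,…,g]`.  Then
`I_{u_f} = I ∖ {s_1, s_2, …, s_{g−f}}`. -/
theorem stmt_13 (g : ℕ) (hg : 1 ≤ g)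
    (z : Equiv.Perm (Fin (2 * g)))
    (hz : ∀ i : Fin (2 * g),
      (z i : ℕ) = if (i : ℕ) < g then g + (i : ℕ) else (i : ℕ) - g)
    (u : ℕ → Equiv.Perm (Fin (2 * g)))
    (hu : ∀ f ≤ g, ∀ i : Fin (2 * g), (u f i : ℕ) = uLine g f i) :
    ∀ f ≤ g,
      {t ∈ sgen g '' Set.Icc 1 (g - 1) |
          ∀ k : ℕ, 1 ≤ k →
            (u f * z) ^ k * t * ((u f * z) ^ k)⁻¹ ∈ sgen g '' Set.Icc 1 (g - 1)}
        = (sgen g '' Set.Icc 1 (g - 1)) \ (sgen g '' Set.Icc 1 (g - f)) := by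
  intro f hf
  have hv : ∀ x : Fin (2 * g), ((u f * z) x : ℕ) = vVal g f x := by
    intro x
    have hx := x.2
    rw [Equiv.Perm.mul_apply, hu f hf, hz]
    unfold uLine vVal
    split_ifs <;> omega
  generalize u f * z = v at hv
  ext t
  constructor
  · rintro ⟨ht, H⟩
    refine ⟨ht, ?_⟩
    rintro ⟨j, ⟨hj1, hj2⟩, rfl⟩
    by_cases hj : j ≤ g - 1
    · exact not_all g f hf v hv _ j le_rfl hj1 hj hj2 H
    · obtain ⟨i, ⟨hi1, hi2⟩, hi⟩ := ht
      obtain rfl : j = g := by omega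
      have h := congrArg (fun p : Equiv.Perm (Fin (2 * j)) =>
        ((p ⟨j - 1, by omega⟩ : Fin (2 * j)) : ℕ)) hi
      simp only [sgen_val j i hi1 hi2] at h
      have h' : ((sgen j j ⟨j - 1, by omega⟩ : Fin (2 * j)) : ℕ) = j := by
        unfold sgen
        rw [dif_neg (by omega), dif_pos ⟨rfl, hg⟩, Equiv.swap_apply_left]
      rw [h'] at h
      split_ifs at h <;> omega
  · rintro ⟨⟨i, ⟨hi1, hi2⟩, rfl⟩, hn⟩
    have h3 : g - f < i := by
      by_contra hc
      exact hn ⟨i, ⟨hi1, by omega⟩, rfl⟩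
    refine ⟨⟨i, ⟨hi1, hi2⟩, rfl⟩, fun k _ => ⟨i, ⟨hi1, hi2⟩, ?_⟩⟩
    clear hn
    induction k with
    | zero => simp
    | succ k ih =>
      rw [conj_pow_succ, conj_fix g f hf v hv i hi1 hi2 h3]
      by_cases hk : 1 ≤ k
      · exact ih hk
      · obtain rfl : k = 0 := by omega
        simp
end

section
/- Let p be an indeterminate (or any element of ℚ) and work in the polynomial ring ℚ(p)[x_1, x_2, y_1, y_2] (equivalently ℚ[p][x_1,x_2,y_1,y_2]). Define the operators δ_1(f) = (f(x_1,x_2,y_1,y_2) − f(x_2,x_1,y_1,y_2))/(x_1 − x_2) and δ_2(f) = (f(x_1,x_2,y_1,y_2) − f(x_1,−x_2,y_1,y_2))/(2x_2), and the algebra homomorphism ψ : ℚ(p)[x_1,x_2,y_1,y_2] → ℚ(p)[x_1,x_2] given by x_1 ↦ −x_2, x_2 ↦ −x_1, y_1 ↦ p·x_1, y_2 ↦ p·x_2. Set Φ := x_1 − y_2 and Γ := (x_1 + x_2 + y_1 + y_2)(x_1x_2 + y_1y_2). Then: ψ(ΦΓ) = −(p⁴−1)(x_1+x_2)x_1x_2²;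 ψ(δ_2(ΦΓ)) = −(p²−1)(p x_1 − x_2)x_2²; ψ(δ_2δ_1(ΦΓ)) = (p−1)(p x_1 − x_2)x_2; and ψ(δ_2δ_1δ_2(ΦΓ)) = p x_1 − x_2. -/
open MvPolynomial

/-- Work in `ℚ[x₁,x₂,y₁,y₂]` (variables `X 0, X 1, X 2, X 3`), with `p` an
arbitrary element of `ℚ`.  Let `δ₁, δ₂` be the Demazure operators characterized by
`(x₁ − x₂)·δ₁ f = f − f(x₂,x₁,y₁,y₂)` and `(2x₂)·δ₂ f = f − f(x₁,−x₂,y₁,y₂)`, and let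
`ψ : ℚ[x₁,x₂,y₁,y₂] → ℚ[x₁,x₂]` be the algebra homomorphism with `x₁ ↦ −x₂`, `x₂ ↦ −x₁`,
`y₁ ↦ p·x₁`, `y₂ ↦ p·x₂`.  Set `Φ := x₁ − y₂` and
`Γ := (x₁+x₂+y₁+y₂)(x₁x₂+y₁y₂)`.  Then
`ψ(ΦΓ) = −(p⁴−1)(x₁+x₂)x₁x₂²`, `ψ(δ₂(ΦΓ)) = −(p²−1)(p·x₁−x₂)x₂²`,
`ψ(δ₂δ₁(ΦΓ)) = (p−1)(p·x₁−x₂)x₂` and `ψ(δ₂δ₁δ₂(ΦΓ)) = p·x₁−x₂`. -/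
theorem stmt_14 (p : ℚ)
    (δ₁ δ₂ : MvPolynomial (Fin 4) ℚ → MvPolynomial (Fin 4) ℚ)
    (hδ₁ : ∀ f, (X 0 - X 1) * δ₁ f = f - aeval ![X 1, X 0, X 2, X 3] f)
    (hδ₂ : ∀ f, (2 * X 1) * δ₂ f = f - aeval ![X 0, -X 1, X 2, X 3] f)
    (ψ : MvPolynomial (Fin 4) ℚ →ₐ[ℚ] MvPolynomial (Fin 2) ℚ)
    (hψ : ψ = aeval ![-X 1, -X 0, C p * X 0, C p * X 1])
    (Φ Γ : MvPolynomial (Fin 4) ℚ)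
    (hΦ : Φ = X 0 - X 3)
    (hΓ : Γ = (X 0 + X 1 + X 2 + X 3) * (X 0 * X 1 + X 2 * X 3)) :
    ψ (Φ * Γ) = -(C (p ^ 4 - 1)) * ((X 0 + X 1) * (X 0 * X 1 ^ 2))
    ∧ ψ (δ₂ (Φ * Γ)) = -(C (p ^ 2 - 1)) * ((C p * X 0 - X 1) * X 1 ^ 2)
    ∧ ψ (δ₂ (δ₁ (Φ * Γ))) = C (p - 1) * ((C p * X 0 - X 1) * X 1)
    ∧ ψ (δ₂ (δ₁ (δ₂ (Φ * Γ)))) = C p * X 0 - X 1 := by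
  have hX1 : (2 * X 1 : MvPolynomial (Fin 4) ℚ) ≠ 0 :=
    mul_ne_zero two_ne_zero (X_ne_zero 1)
  have hX01 : (X 0 - X 1 : MvPolynomial (Fin 4) ℚ) ≠ 0 := by
    rw [sub_ne_zero]
    intro h
    exact absurd (X_injective h) (by decide)
  have e1 : δ₂ (Φ * Γ) = (X 0 ^ 2 - X 3 ^ 2) * (X 0 + X 2) := by
    apply mul_left_cancel₀ hX1
    rw [hδ₂, hΦ, hΓ]
    simp
    ring
  have e2 : δ₁ (Φ * Γ) = Γ := by
    apply mul_left_cancel₀ hX01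
    rw [hδ₁, hΦ, hΓ]
    simp
    ring
  have e3 : δ₂ Γ = (X 0 + X 2) * (X 0 + X 3) := by
    apply mul_left_cancel₀ hX1
    rw [hδ₂, hΓ]
    simp
    ring
  have e4 : δ₁ ((X 0 ^ 2 - X 3 ^ 2) * (X 0 + X 2)) =
      X 0 ^ 2 + X 0 * X 1 + X 1 ^ 2 + X 2 * (X 0 + X 1) - X 3 ^ 2 := by
    apply mul_left_cancel₀ hX01
    rw [hδ₁]
    simp
    ring
  have e5 : δ₂ (X 0 ^ 2 + X 0 * X 1 + X 1 ^ 2 + X 2 * (X 0 + X 1) - X 3 ^ 2) =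
      X 0 + X 2 := by
    apply mul_left_cancel₀ hX1
    rw [hδ₂]
    simp
    ring
  rw [e2, e3, e1, e4, e5, hψ, hΦ, hΓ]
  refine ⟨?_, ?_, ?_, ?_⟩
  all_goals
    simp
    ring
end

section
/- Let d ≥ 1, let p be an indeterminate (or any element of ℚ), and let A := ℚ(p)[z_0, …, z_{d−1}]/(z_0², …, z_{d−1}²), with indices read modulo d. Then the following identities hold in A: (1) ∏_{i=0}^{d−1} (z_i − p·z_{i+1}) = (1 + (−1)^d p^d) · z_0 z_1 ⋯ z_{d−1}; and (2) (z_0 + z_1 + ⋯ + z_{d−1})^d = d! · z_0 z_1 ⋯ z_{d−1}. Consequently, with λ := −(z_0 + ⋯ + z_{d−1}), one has ∏_{i=0}^{d−1}(z_i − p z_{i+1}) = ((p^d + (−1)^d)/d!) · λ^d. -/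
open MvPolynomial

/-- The ring `A = ℚ[z_0,…,z_{d−1}]/(z_0²,…,z_{d−1}²)`. -/
noncomputable abbrev HBRing (d : ℕ) :=
  MvPolynomial (Fin d) ℚ ⧸
    Ideal.span {f : MvPolynomial (Fin d) ℚ | ∃ i : Fin d, f = X i ^ 2}

theorem hb_prod_left {R : Type*} [CommRing R] (z : ℕ → R) (h : ∀ k, z k ^ 2 = 0) (c : R) (n : ℕ) :
    z 0 * ∏ i ∈ Finset.range n, (z i - c * z (i + 1))
      = (-c) ^ n * ∏ i ∈ Finset.range (n + 1), z i := by
  induction n with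
  | zero => simp
  | succ n ih =>
    rw [Finset.prod_range_succ, ← mul_assoc, ih, Finset.prod_range_succ _ (n + 1),
      Finset.prod_range_succ _ n]
    linear_combination (-c) ^ n * (∏ i ∈ Finset.range n, z i) * h n

theorem hb_prod_right {R : Type*} [CommRing R] (z : ℕ → R) (h : ∀ k, z k ^ 2 = 0) (c : R) (n : ℕ) :
    (∏ i ∈ Finset.range n, (z i - c * z (i + 1))) * z n = ∏ i ∈ Finset.range (n + 1), z i := by
  induction n with
  | zero => simp
  | succ n ih =>
    rw [Finset.prod_range_succ, Finset.prod_range_succ _ (n + 1), ← ih]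
    linear_combination
      (-c) * (∏ i ∈ Finset.range n, (z i - c * z (i + 1))) * h (n + 1)

theorem hb_prod_cyc {R : Type*} [CommRing R] (z : ℕ → R) (h : ∀ k, z k ^ 2 = 0) (c : R) (n : ℕ)
    (h0 : z (n + 1) = z 0) :
    ∏ i ∈ Finset.range (n + 1), (z i - c * z (i + 1))
      = (1 + (-1) ^ (n + 1) * c ^ (n + 1)) * ∏ i ∈ Finset.range (n + 1), z i := by
  have e1 := hb_prod_left z h c n
  have e2 := hb_prod_right z h c n
  rw [Finset.prod_range_succ, h0, ← mul_pow, neg_one_mul, pow_succ]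
  linear_combination e2 - c * e1

theorem hb_add_pow {R : Type*} [CommRing R] (s x : R) (h : x ^ 2 = 0) (n : ℕ) :
    (s + x) ^ (n + 1) = s ^ (n + 1) + (n + 1) * s ^ n * x := by
  induction n with
  | zero => simp
  | succ n ih =>
    rw [pow_succ, ih]
    push_cast
    linear_combination ((n : R) + 1) * s ^ n * h

theorem hb_sum_pow {R : Type*} [CommRing R] (z : ℕ → R) (h : ∀ k, z k ^ 2 = 0) (n : ℕ) :
    (∑ i ∈ Finset.range n, z i) ^ n = (n.factorial : R) * ∏ i ∈ Finset.range n, z i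
    ∧ (∑ i ∈ Finset.range n, z i) ^ (n + 1) = 0 := by
  induction n with
  | zero => simp
  | succ n ih =>
    obtain ⟨h1, h2⟩ := ih
    rw [Finset.sum_range_succ, Finset.prod_range_succ, hb_add_pow _ _ (h n),
      hb_add_pow _ _ (h n), pow_succ _ (n + 1), h2, h1, Nat.factorial_succ]
    push_cast
    constructor <;> ring

/-- Let `d ≥ 1`, `p ∈ ℚ`, and `A := ℚ[z_0,…,z_{d−1}]/(z_0²,…,z_{d−1}²)`,
indices read modulo `d`.  Then in `A`:
(1) `∏_{i=0}^{d−1} (z_i − p·z_{i+1}) = (1 + (−1)^d·p^d) · z_0⋯z_{d−1}`;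
(2) `(z_0 + ⋯ + z_{d−1})^d = d! · z_0⋯z_{d−1}`; and consequently, with
`λ := −(z_0 + ⋯ + z_{d−1})`, one has
`∏_{i=0}^{d−1} (z_i − p·z_{i+1}) = ((p^d + (−1)^d)/d!) · λ^d`. -/
theorem stmt_16 (d : ℕ) (hd : 1 ≤ d) (p : ℚ)
    (z : ℕ → HBRing d)
    (hz : ∀ k : ℕ, z k = Ideal.Quotient.mk _ (X ⟨k % d, Nat.mod_lt k hd⟩)) :
    (∏ i ∈ Finset.range d, (z i - p • z (i + 1))
        = (1 + (-1 : ℚ) ^ d * p ^ d) • ∏ i ∈ Finset.range d, z i)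
    ∧ ((∑ i ∈ Finset.range d, z i) ^ d
        = (d.factorial : ℚ) • ∏ i ∈ Finset.range d, z i)
    ∧ (∏ i ∈ Finset.range d, (z i - p • z (i + 1))
        = ((p ^ d + (-1 : ℚ) ^ d) / (d.factorial : ℚ))
            • (-(∑ i ∈ Finset.range d, z i)) ^ d) := by
  have h : ∀ k, z k ^ 2 = 0 := by
    intro k
    rw [hz k, ← map_pow]
    exact Ideal.Quotient.eq_zero_iff_mem.mpr (Ideal.subset_span ⟨_, rfl⟩)
  have hsm : ∀ (q : ℚ) (x : HBRing d), q • x = algebraMap ℚ (HBRing d) q * x :=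
    fun q x => Algebra.smul_def q x
  have h0 : z d = z 0 := by
    rw [hz d, hz 0]
    simp
  have A1 : ∏ i ∈ Finset.range d, (z i - p • z (i + 1))
        = (1 + (-1 : ℚ) ^ d * p ^ d) • ∏ i ∈ Finset.range d, z i := by
    obtain ⟨n, rfl⟩ : ∃ n, d = n + 1 := ⟨d - 1, by omega⟩
    simp only [hsm]
    have e3 := hb_prod_cyc z h (algebraMap ℚ _ p) n h0
    rw [e3]
    simp only [map_add, map_mul, map_pow, map_neg, map_one]
  have A2 : (∑ i ∈ Finset.range d, z i) ^ d
        = (d.factorial : ℚ) • ∏ i ∈ Finset.range d, z i := by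
    rw [(hb_sum_pow z h d).1, hsm, map_natCast]
  refine ⟨A1, A2, ?_⟩
  have hf : (d.factorial : ℚ) ≠ 0 := by exact_mod_cast d.factorial_ne_zero
  have hs : (-1 : ℚ) ^ d * (-1 : ℚ) ^ d = 1 := by
    rw [← mul_pow]
    simp
  have e : (-(∑ i ∈ Finset.range d, z i)) ^ d
      = ((-1 : ℚ) ^ d) • (∑ i ∈ Finset.range d, z i) ^ d := by
    rw [neg_pow (∑ i ∈ Finset.range d, z i), hsm]
    simp
  rw [A1, e, A2, smul_smul, smul_smul]
  congr 1
  field_simp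
  linear_combination -hs
end
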